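/- arXiv:0801.4786 — 4 statements merged into one kernel-verified Lean document; each statement's English description precedes it below -/
import Mathlib

section
/- Let n ≥ 2 and let p be a prime. For every i with 1 ≤ i ≤ n−2, the colored Burau pairs satisfy the adjacent braid relation in the semidirect product: g_i · g_{i+1} · g_i = g_{i+1} · g_i · g_{i+1} in GL(n,F) ⋊ S_n. -/
/-- `F` : the field of fractions of the multivariate polynomial ring over `𝔽_p = ZMod p`
in variables `t_1, …, t_n` (0-indexed as `X 0, …, X (n-1)`). -/
noncomputable abbrev BurauField (n p : ℕ) : Type :=
  FractionRing (MvPolynomial (Fin n) (ZMod p))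

/-- The variable `t_i` (1-based index `i`, so `tvar n p (i-1)` is `t_i`) viewed inside
the fraction field. -/
noncomputable def tvar (n p : ℕ) (k : ℕ) : BurauField n p :=
  if h : k < n then
    algebraMap (MvPolynomial (Fin n) (ZMod p)) (BurauField n p) (MvPolynomial.X ⟨k, h⟩)
  else 0

/-- The colored Burau matrix `x_i(t)` (1-based index `i` with `1 ≤ i ≤ n-1`):
the identity matrix except for the `i`-th row, which has entries `t_i, -t_i, 1`
in columns `i-1, i, i+1` (with `-t_i` on the diagonal); for `i = 1` the first row
is `(-t_1, 1, 0, …, 0)`. -/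
noncomputable def colBurau (n p : ℕ) (i : ℕ) : Matrix (Fin n) (Fin n) (BurauField n p) :=
  Matrix.of fun r c =>
    if (r : ℕ) + 1 = i then
      if (c : ℕ) + 1 = i then -(tvar n p (i - 1))
      else if (c : ℕ) = i then 1
      else if (c : ℕ) + 2 = i then tvar n p (i - 1)
      else 0
    else if r = c then 1 else 0

/-- The action of a permutation `s ∈ S_n` on the fraction field, permuting the
variables `t_1, …, t_n`. -/
noncomputable def permF (n p : ℕ) (s : Equiv.Perm (Fin n)) : BurauField n p ≃+* BurauField n p :=
  IsFractionRing.ringEquivOfRingEquiv (MvPolynomial.renameEquiv (ZMod p) s).toRingEquiv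

/-- Burau-type matrix with free parameter, 0-based. -/
def genB {K : Type*} [CommRing K] (n : ℕ) (u : K) (k : ℕ) : Matrix (Fin n) (Fin n) K :=
  Matrix.of fun r c =>
    if (r : ℕ) = k then
      if (c : ℕ) = k then -u
      else if (c : ℕ) = k + 1 then 1
      else if (c : ℕ) + 1 = k then u
      else 0
    else if (r : ℕ) = c then 1 else 0

lemma mul_genB {K : Type*} [CommRing K] (n : ℕ) (u : K) (k : ℕ) (hk : k < n)
    (M : Matrix (Fin n) (Fin n) K) (r c : Fin n) :
    (M * genB n u k) r c = M r c + M r ⟨k, hk⟩ *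
      (if (c : ℕ) = k then -u - 1
      else if (c : ℕ) = k + 1 then 1
      else if (c : ℕ) + 1 = k then u
      else 0) := by
  have h : genB n u k = 1 + Matrix.vecMulVec (Pi.single ⟨k, hk⟩ 1) (fun c : Fin n =>
      (if (c : ℕ) = k then -u - 1
      else if (c : ℕ) = k + 1 then 1
      else if (c : ℕ) + 1 = k then u
      else 0)) := by
    ext r c
    simp only [genB, Matrix.of_apply, Matrix.add_apply, Matrix.one_apply, Matrix.vecMulVec_apply,
      Pi.single_apply, Fin.ext_iff]
    split_ifs <;> first | omega | ring
  rw [h, mul_add, mul_one, Matrix.add_apply, Matrix.mul_vecMulVec, Matrix.vecMulVec_apply]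
  simp

lemma genB_braid {K : Type*} [CommRing K] (n : ℕ) (a b : K) (k : ℕ) (hk : k + 1 < n) :
    genB n a k * genB n a (k + 1) * genB n b k =
      genB n b (k + 1) * genB n a k * genB n a (k + 1) := by
  ext r c
  have hk0 : k < n := by omega
  simp only [mul_genB n _ k hk0, mul_genB n _ (k + 1) hk]
  simp only [genB, Matrix.of_apply]
  by_cases h0 : (r : ℕ) = k
  · by_cases c0 : (c : ℕ) = k
    · have : ¬ k = k + 1 + 1 := by omega
      simp [h0, c0, this]
    by_cases c1 : (c : ℕ) = k + 1
    · have : ¬ k = k + 1 + 1 := by omega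
      simp [h0, c1, this]
    split_ifs <;> first | omega | (simp; done) | (simp; ring)
  by_cases h1 : (r : ℕ) = k + 1
  · split_ifs <;> first | omega | (simp; done) | (simp; ring)
  split_ifs <;> first | omega | (simp; done) | (simp; ring)

lemma colBurau_eq (n p k : ℕ) : colBurau n p (k + 1) = genB n (tvar n p k) k := by
  ext r c
  simp only [colBurau, genB, Matrix.of_apply, Fin.ext_iff, Nat.add_sub_cancel]
  split_ifs <;> first | omega | rfl

lemma genB_map {K L : Type*} [CommRing K] [CommRing L] (n : ℕ) (u : K) (k : ℕ) (f : K ≃+* L) :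
    (genB n u k).map f = genB n (f u) k := by
  ext r c
  simp only [genB, Matrix.of_apply, Matrix.map_apply]
  split_ifs <;> simp

lemma permF_tvar (n p : ℕ) [Fact p.Prime] (s : Equiv.Perm (Fin n)) (k : ℕ) (h : k < n) :
    permF n p s (tvar n p k) = tvar n p (s ⟨k, h⟩) := by
  simp [permF, tvar, h]

/-- For `n ≥ 2` and `p` a prime, and `1 ≤ i ≤ n-2`, the colored Burau pairs
`g_i = (x_i(t), s_i)` satisfy the adjacent braid relation
`g_i · g_{i+1} · g_i = g_{i+1} · g_i · g_{i+1}` in `GL(n,F) ⋊ S_n`.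
Here `φ` is the action of `S_n` on `GL(n,F)` induced by permuting the variables
(characterized entrywise by `hφ`), `x i ∈ GL(n,F)` is the colored Burau matrix
(characterized by `hx`), and `s_i` is the transposition `(i, i+1)`
(0-indexed: `Equiv.swap ⟨i-1,_⟩ ⟨i,_⟩`). -/
theorem colored_burau_adjacent_braid_relation (n p : ℕ) (hn : 2 ≤ n) (hp : p.Prime)
    (φ : Equiv.Perm (Fin n) →* MulAut (GL (Fin n) (BurauField n p)))
    (hφ : ∀ (s : Equiv.Perm (Fin n)) (m : GL (Fin n) (BurauField n p)),
      ((φ s m : Matrix (Fin n) (Fin n) (BurauField n p)) =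
        (m : Matrix (Fin n) (Fin n) (BurauField n p)).map (permF n p s)))
    (x : ℕ → GL (Fin n) (BurauField n p))
    (hx : ∀ i, 1 ≤ i → i ≤ n - 1 →
      ((x i : Matrix (Fin n) (Fin n) (BurauField n p)) = colBurau n p i))
    (i : ℕ) (h1 : 1 ≤ i) (h2 : i ≤ n - 2) :
    (⟨x i, Equiv.swap ⟨i - 1, by omega⟩ ⟨i, by omega⟩⟩ :
        GL (Fin n) (BurauField n p) ⋊[φ] Equiv.Perm (Fin n)) *
      ⟨x (i + 1), Equiv.swap ⟨i, by omega⟩ ⟨i + 1, by omega⟩⟩ *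
      ⟨x i, Equiv.swap ⟨i - 1, by omega⟩ ⟨i, by omega⟩⟩ =
    (⟨x (i + 1), Equiv.swap ⟨i, by omega⟩ ⟨i + 1, by omega⟩⟩ :
        GL (Fin n) (BurauField n p) ⋊[φ] Equiv.Perm (Fin n)) *
      ⟨x i, Equiv.swap ⟨i - 1, by omega⟩ ⟨i, by omega⟩⟩ *
      ⟨x (i + 1), Equiv.swap ⟨i, by omega⟩ ⟨i + 1, by omega⟩⟩ := by
  have : Fact p.Prime := ⟨hp⟩
  obtain ⟨k, rfl⟩ : ∃ k, i = k + 1 := ⟨i - 1, by omega⟩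
  have hk0 : k < n := by omega
  have hk1 : k + 1 < n := by omega
  have hk2 : k + 2 < n := by omega
  have e1 := hx (k + 1) (by omega) (by omega)
  have e2 := hx (k + 1 + 1) (by omega) (by omega)
  rw [colBurau_eq] at e1 e2
  refine SemidirectProduct.ext ?_ ?_
  · apply Units.ext
    simp only [SemidirectProduct.mul_left, SemidirectProduct.mul_right, Units.val_mul, hφ, e1, e2,
      genB_map, permF_tvar _ _ _ k hk0, permF_tvar _ _ _ (k + 1) hk1]
    have q1 : Equiv.swap (⟨k, hk0⟩ : Fin n) ⟨k + 1, hk1⟩ ⟨k + 1, hk1⟩ = ⟨k, hk0⟩ :=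
      Equiv.swap_apply_right _ _
    have q2 : Equiv.swap (⟨k, hk0⟩ : Fin n) ⟨k + 1, hk1⟩ ⟨k, hk0⟩ = ⟨k + 1, hk1⟩ :=
      Equiv.swap_apply_left _ _
    have q3 : Equiv.swap (⟨k + 1, hk1⟩ : Fin n) ⟨k + 1 + 1, hk2⟩ ⟨k, hk0⟩ = ⟨k, hk0⟩ := by
      apply Equiv.swap_apply_of_ne_of_ne <;> simp only [ne_eq, Fin.mk.injEq] <;> omega
    simp only [Nat.add_sub_cancel, Equiv.Perm.mul_apply, q1, q2, q3]
    exact genB_braid n (tvar n p k) (tvar n p (k + 1)) k hk1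
  · simp only [SemidirectProduct.mul_right, Nat.add_sub_cancel]
    have hab : (⟨k, hk0⟩ : Fin n) ≠ ⟨k + 1, hk1⟩ := by
      simp only [ne_eq, Fin.mk.injEq]; omega
    have hac : (⟨k, hk0⟩ : Fin n) ≠ ⟨k + 1 + 1, hk2⟩ := by
      simp only [ne_eq, Fin.mk.injEq]; omega
    have hbc : (⟨k + 1, hk1⟩ : Fin n) ≠ ⟨k + 1 + 1, hk2⟩ := by
      simp only [ne_eq, Fin.mk.injEq]; omega
    rw [Equiv.swap_mul_swap_mul_swap hab hac,
      Equiv.swap_comm (⟨k, hk0⟩ : Fin n) ⟨k + 1, hk1⟩,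
      Equiv.swap_comm (⟨k + 1, hk1⟩ : Fin n) ⟨k + 1 + 1, hk2⟩,
      Equiv.swap_mul_swap_mul_swap hbc.symm hac.symm, Equiv.swap_comm]
end

section
/- Let n ≥ 2, let p be a prime, and let w = ∏_{k=1}^{m} g_{i_k}^{ε_k} and v = ∏_{q=1}^{l} g_{j_q}^{δ_q} be products of colored Burau generators and their inverses in GL(n,F) ⋊ S_n such that |i_k − j_q| > 1 for every k = 1,…,m and q = 1,…,l. Then w and v commute: w · v = v · w in GL(n,F) ⋊ S_n. -/
lemma permF_tvar_s4 (n p : ℕ) (a b : Fin n) (k : ℕ) (ha : k ≠ a) (hb : k ≠ b) :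
    permF n p (Equiv.swap a b) (tvar n p k) = tvar n p k := by
  unfold tvar
  split_ifs with h
  · have h1 : (⟨k, h⟩ : Fin n) ≠ a := fun e => ha (by rw [← e])
    have h2 : (⟨k, h⟩ : Fin n) ≠ b := fun e => hb (by rw [← e])
    unfold permF
    rw [IsFractionRing.ringEquivOfRingEquiv_algebraMap]
    congr 1
    change MvPolynomial.rename (Equiv.swap a b) (MvPolynomial.X ⟨k, h⟩) = _
    rw [MvPolynomial.rename_X, Equiv.swap_apply_of_ne_of_ne h1 h2]
  · simp

lemma colBurau_map (n p : ℕ) (a b : Fin n) (i : ℕ) (ha : i - 1 ≠ a) (hb : i - 1 ≠ b) :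
    (colBurau n p i).map (permF n p (Equiv.swap a b)) = colBurau n p i := by
  have h := permF_tvar_s4 n p a b (i - 1) ha hb
  ext r c
  simp only [colBurau, Matrix.map_apply, Matrix.of_apply]
  split_ifs <;> simp [h]

lemma colBurau_nil (n p i j : ℕ) (hij : 1 < ((i : ℤ) - (j : ℤ)).natAbs) :
    (colBurau n p i - 1) * (colBurau n p j - 1) = 0 := by
  ext r c
  rw [Matrix.mul_apply, Matrix.zero_apply]
  refine Finset.sum_eq_zero fun k _ => ?_
  by_cases hk : (k : ℕ) + 1 = j
  · have : (colBurau n p i - 1) r k = 0 := by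
      simp only [colBurau, Matrix.sub_apply, Matrix.of_apply, Matrix.one_apply]
      by_cases hr : (r : ℕ) + 1 = i
      · have h4 : r ≠ k := by rintro rfl; omega
        rw [if_pos hr, if_neg (by omega), if_neg (by omega), if_neg (by omega), if_neg h4, sub_zero]
      · rw [if_neg hr, sub_self]
    rw [this, zero_mul]
  · have : (colBurau n p j - 1) k c = 0 := by
      simp only [colBurau, Matrix.sub_apply, Matrix.of_apply, Matrix.one_apply]
      rw [if_neg hk, sub_self]
    rw [this, mul_zero]

lemma colBurau_comm (n p i j : ℕ) (hij : 1 < ((i : ℤ) - (j : ℤ)).natAbs) :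
    colBurau n p i * colBurau n p j = colBurau n p j * colBurau n p i := by
  have h1 := colBurau_nil n p i j hij
  have h2 := colBurau_nil n p j i (by omega)
  have : Commute (colBurau n p i - 1) (colBurau n p j - 1) := h1.trans h2.symm
  have h3 := (this.add_left (Commute.one_left _)).add_right (Commute.one_right _)
  simpa using h3.eq

/-- Let `w = ∏_{k=1}^m g_{i_k}^{ε_k}` and `v = ∏_{q=1}^l g_{j_q}^{δ_q}` be products of
colored Burau generators `g_i = (x_i(t), s_i)` and their inverses in `GL(n,F) ⋊ S_n`,
with `|i_k - j_q| > 1` for all `k, q`.  Then `w · v = v · w`.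
Here `φ` is the action of `S_n` on `GL(n,F)` induced by permuting the variables
(characterized entrywise by `hφ`), `x i ∈ GL(n,F)` is the colored Burau matrix
(characterized by `hx`), and `s_i` is the transposition `(i, i+1)`
(0-indexed: `Equiv.swap ⟨i-1,_⟩ ⟨i,_⟩`). -/
theorem colored_burau_distant_products_commute (n p : ℕ) (hn : 2 ≤ n) (hp : p.Prime)
    (φ : Equiv.Perm (Fin n) →* MulAut (GL (Fin n) (BurauField n p)))
    (hφ : ∀ (s : Equiv.Perm (Fin n)) (m : GL (Fin n) (BurauField n p)),
      ((φ s m : Matrix (Fin n) (Fin n) (BurauField n p)) =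
        (m : Matrix (Fin n) (Fin n) (BurauField n p)).map (permF n p s)))
    (x : ℕ → GL (Fin n) (BurauField n p))
    (hx : ∀ i, 1 ≤ i → i ≤ n - 1 →
      ((x i : Matrix (Fin n) (Fin n) (BurauField n p)) = colBurau n p i))
    (m l : ℕ) (I : Fin m → ℕ) (J : Fin l → ℕ)
    (hI : ∀ k, 1 ≤ I k ∧ I k ≤ n - 1) (hJ : ∀ q, 1 ≤ J q ∧ J q ≤ n - 1)
    (ε : Fin m → ℤ) (hε : ∀ k, ε k = 1 ∨ ε k = -1)
    (δ : Fin l → ℤ) (hδ : ∀ q, δ q = 1 ∨ δ q = -1)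
    (hIJ : ∀ k q, 1 < ((I k : ℤ) - (J q : ℤ)).natAbs) :
    (List.ofFn fun k : Fin m =>
        ((⟨x (I k), Equiv.swap ⟨I k - 1, by have := hI k; omega⟩
            ⟨I k, by have := hI k; omega⟩⟩ :
          GL (Fin n) (BurauField n p) ⋊[φ] Equiv.Perm (Fin n)) ^ (ε k))).prod *
      (List.ofFn fun q : Fin l =>
        ((⟨x (J q), Equiv.swap ⟨J q - 1, by have := hJ q; omega⟩
            ⟨J q, by have := hJ q; omega⟩⟩ :
          GL (Fin n) (BurauField n p) ⋊[φ] Equiv.Perm (Fin n)) ^ (δ q))).prod =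
    (List.ofFn fun q : Fin l =>
        ((⟨x (J q), Equiv.swap ⟨J q - 1, by have := hJ q; omega⟩
            ⟨J q, by have := hJ q; omega⟩⟩ :
          GL (Fin n) (BurauField n p) ⋊[φ] Equiv.Perm (Fin n)) ^ (δ q))).prod *
      (List.ofFn fun k : Fin m =>
        ((⟨x (I k), Equiv.swap ⟨I k - 1, by have := hI k; omega⟩
            ⟨I k, by have := hI k; omega⟩⟩ :
          GL (Fin n) (BurauField n p) ⋊[φ] Equiv.Perm (Fin n)) ^ (ε k))).prod := by
  have key : ∀ k q, Commute
      (⟨x (I k), Equiv.swap ⟨I k - 1, by have := hI k; omega⟩ ⟨I k, by have := hI k; omega⟩⟩ :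
          GL (Fin n) (BurauField n p) ⋊[φ] Equiv.Perm (Fin n))
      (⟨x (J q), Equiv.swap ⟨J q - 1, by have := hJ q; omega⟩ ⟨J q, by have := hJ q; omega⟩⟩ :
          GL (Fin n) (BurauField n p) ⋊[φ] Equiv.Perm (Fin n)) := by
    intro k q
    have h1 := hI k
    have h2 := hJ q
    have h3 := hIJ k q
    have hl : ∀ (a b : Fin n) (i : ℕ), 1 ≤ i → i ≤ n - 1 → i - 1 ≠ a → i - 1 ≠ b →
        φ (Equiv.swap a b) (x i) = x i := by
      intro a b i hi hi' ha hb
      apply Units.ext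
      rw [hφ, hx i hi hi', colBurau_map n p a b i ha hb]
    refine SemidirectProduct.ext ?_ ?_
    · simp only [SemidirectProduct.mul_left]
      rw [hl _ _ _ h2.1 h2.2 (by simp only; omega) (by simp only; omega),
        hl _ _ _ h1.1 h1.2 (by simp only; omega) (by simp only; omega)]
      apply Units.ext
      rw [Units.val_mul, Units.val_mul, hx _ h1.1 h1.2, hx _ h2.1 h2.2]
      exact colBurau_comm n p _ _ h3
    · simp only [SemidirectProduct.mul_right]
      refine (Equiv.Perm.Disjoint.commute ?_).eq
      intro y
      by_cases hy : (y : ℕ) = I k - 1 ∨ (y : ℕ) = I k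
      · right
        apply Equiv.swap_apply_of_ne_of_ne <;> (rintro rfl; simp only at hy; omega)
      · left
        exact Equiv.swap_apply_of_ne_of_ne (fun e => hy (Or.inl (by rw [e])))
          (fun e => hy (Or.inr (by rw [e])))
  refine (Commute.list_prod_left _ _ fun a ha => Commute.list_prod_right _ _ fun b hb => ?_).eq
  rw [List.mem_ofFn] at ha hb
  obtain ⟨k, rfl⟩ := ha
  obtain ⟨q, rfl⟩ := hb
  exact (key k q).zpow_zpow _ _
end

section
/- Shared key correctness of CBKAP: let M and N be groups, let S be a group acting on M by group automorphisms, and let π : M → N be a group homomorphism. Let n_a, n_b ∈ N with n_a n_b = n_b n_a, and let x, y ∈ M ⋊ S with x · y = y · x. Writing 1 for the identity of S and n₀ • (n, s) = (n₀ n, s) for n₀ ∈ N and (n,s) ∈ N × S, Alice's and Bob's computed keys agree: (n_a • ((n_b, 1) ★ y)) ★ x = (n_b • ((n_a, 1) ★ x)) ★ y in N × S. -/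
/-- The `★`-operation of the semidirect product `M ⋊[φ] S` on `N × S` (where `S` acts on
`M` by the automorphisms `φ` and `π : M →* N` is a group homomorphism):
`(n, s₁) ★ (m, s₂) = (n · π(s₁ • m), s₁ s₂)`. -/
def starOp {M N S : Type*} [Group M] [Group N] [Group S]
    (φ : S →* MulAut M) (π : M →* N) (a : N × S) (x : M ⋊[φ] S) : N × S :=
  (a.1 * π (φ a.2 x.left), a.2 * x.right)


/-- Shared key correctness of CBKAP: if `n_a, n_b ∈ N` commute and `x, y ∈ M ⋊ S`
commute, then Alice's and Bob's computed keys agree: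
`(n_a • ((n_b, 1) ★ y)) ★ x = (n_b • ((n_a, 1) ★ x)) ★ y`, where
`n₀ • (n, s) = (n₀ n, s)`. -/
theorem cbkap_shared_key_correct {M N S : Type*} [Group M] [Group N] [Group S]
    (φ : S →* MulAut M) (π : M →* N)
    (na nb : N) (hab : na * nb = nb * na)
    (x y : M ⋊[φ] S) (hxy : x * y = y * x) :
    starOp φ π (na * (starOp φ π (nb, 1) y).1, (starOp φ π (nb, 1) y).2) x =
    starOp φ π (nb * (starOp φ π (na, 1) x).1, (starOp φ π (na, 1) x).2) y := by
  have h1 := congrArg (fun z => π z.left) hxy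
  have h2 := congrArg (fun z => z.right) hxy
  simp only [SemidirectProduct.mul_left, SemidirectProduct.mul_right, map_mul] at h1 h2
  simp only [starOp, map_one, MulAut.one_apply, one_mul, Prod.mk.injEq]
  refine ⟨?_, h2.symm⟩
  calc na * (nb * π y.left) * π (φ y.right x.left)
      = (na * nb) * (π y.left * π (φ y.right x.left)) := by group
    _ = (nb * na) * (π x.left * π (φ x.right y.left)) := by rw [hab, h1]
    _ = nb * (na * π x.left) * π (φ x.right y.left) := by group
end

section
/- Let n ≥ 2, let Δ ∈ B_n be the half twist, and let ℓ be the geodesic length function on B_n. For every u ∈ B_n and every integer p ≥ 1, ℓ(Δ^{2p}·u) − ℓ(Δ^{2(p−1)}·u) ≥ n·(n−1) − 2·ℓ(u). -/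
/-- The braid relations on `n` strands: generators are indexed by `Fin (n-1)`
(index `i : Fin (n-1)` corresponds to the Artin generator `σ_{i+1}`), with relations
`σ_i σ_j σ_i = σ_j σ_i σ_j` for `|i-j| = 1` and `σ_i σ_j = σ_j σ_i` for `|i-j| > 1`. -/
def braidRels (n : ℕ) : Set (FreeGroup (Fin (n - 1))) :=
  {r | ∃ i j : Fin (n - 1),
    (((i : ℤ) - (j : ℤ)).natAbs = 1 ∧
      r = FreeGroup.of i * FreeGroup.of j * FreeGroup.of i *
          (FreeGroup.of j * FreeGroup.of i * FreeGroup.of j)⁻¹) ∨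
    (1 < ((i : ℤ) - (j : ℤ)).natAbs ∧
      r = FreeGroup.of i * FreeGroup.of j * (FreeGroup.of j * FreeGroup.of i)⁻¹)}

/-- The braid group `B_n` on `n` strands, presented by the Artin generators and the
braid relations. -/
abbrev BraidGroup (n : ℕ) : Type := PresentedGroup (braidRels n)

/-- The Artin generator `σ_{i+1}` of the braid group `B_n` (so `braidGen n ⟨i-1,_⟩`
is the paper's `σ_i`, `1 ≤ i ≤ n-1`). -/
def braidGen (n : ℕ) (i : Fin (n - 1)) : BraidGroup n := PresentedGroup.of i

/-- The half twist `Δ = (σ_1⋯σ_{n-1})·(σ_1⋯σ_{n-2})·⋯·(σ_1) ∈ B_n`. -/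
def halfTwist (n : ℕ) : BraidGroup n :=
  (List.ofFn fun r : Fin (n - 1) =>
    (List.ofFn fun c : Fin (n - 1 - (r : ℕ)) =>
      braidGen n ⟨(c : ℕ), by have := c.isLt; omega⟩).prod).prod

/-- The geodesic length `ℓ(g)` of a braid `g ∈ B_n`: the length of a shortest word over
the alphabet `{σ_1^{±1}, …, σ_{n-1}^{±1}}` representing `g`. -/
noncomputable def geodesicLength (n : ℕ) (g : BraidGroup n) : ℕ :=
  sInf {k | ∃ L : List (BraidGroup n), L.length = k ∧
    (∀ a ∈ L, ∃ i : Fin (n - 1), a = braidGen n i ∨ a = (braidGen n i)⁻¹) ∧ L.prod = g}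

/-- The exponent-sum homomorphism. -/
noncomputable def bexp (n : ℕ) : BraidGroup n →* Multiplicative ℤ :=
  PresentedGroup.toGroup (f := fun _ => Multiplicative.ofAdd 1) (by
    rintro r ⟨i, j, ⟨_, rfl⟩ | ⟨_, rfl⟩⟩ <;> simp)

theorem bexp_gen (n : ℕ) (i : Fin (n - 1)) : bexp n (braidGen n i) = Multiplicative.ofAdd 1 :=
  PresentedGroup.toGroup.of _

/-- `g` is a product of `k` positive generators. -/
def BPos (n : ℕ) (g : BraidGroup n) (k : ℕ) : Prop :=
  ∃ L : List (BraidGroup n), L.length = k ∧ (∀ a ∈ L, ∃ i, a = braidGen n i) ∧ L.prod = g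

/-- `g` is a product of `k` generators or inverses. -/
def BWord (n : ℕ) (g : BraidGroup n) (k : ℕ) : Prop :=
  ∃ L : List (BraidGroup n), L.length = k ∧
    (∀ a ∈ L, ∃ i : Fin (n - 1), a = braidGen n i ∨ a = (braidGen n i)⁻¹) ∧ L.prod = g

theorem BPos.mul {n : ℕ} {g h : BraidGroup n} {a b : ℕ} (hg : BPos n g a) (hh : BPos n h b) :
    BPos n (g * h) (a + b) := by
  obtain ⟨L, rfl, h2, rfl⟩ := hg
  obtain ⟨M, rfl, h4, rfl⟩ := hh
  refine ⟨L ++ M, by simp, ?_, by simp⟩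
  intro x hx
  rcases List.mem_append.1 hx with hx | hx
  exacts [h2 x hx, h4 x hx]

theorem BWord.mul {n : ℕ} {g h : BraidGroup n} {a b : ℕ} (hg : BWord n g a) (hh : BWord n h b) :
    BWord n (g * h) (a + b) := by
  obtain ⟨L, rfl, h2, rfl⟩ := hg
  obtain ⟨M, rfl, h4, rfl⟩ := hh
  refine ⟨L ++ M, by simp, ?_, by simp⟩
  intro x hx
  rcases List.mem_append.1 hx with hx | hx
  exacts [h2 x hx, h4 x hx]

theorem bpos_one (n : ℕ) : BPos n 1 0 := ⟨[], by simp⟩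

theorem bpos_gen (n : ℕ) (i : Fin (n - 1)) : BPos n (braidGen n i) 1 :=
  ⟨[braidGen n i], by simp⟩

theorem bpos_pow {n : ℕ} {g : BraidGroup n} {k : ℕ} (h : BPos n g k) (m : ℕ) :
    BPos n (g ^ m) (m * k) := by
  induction m with
  | zero => simpa using bpos_one n
  | succ m ih => rw [pow_succ, Nat.succ_mul]; exact ih.mul h

theorem bpos_ofFn {n m : ℕ} (f : Fin m → BraidGroup n) (k : Fin m → ℕ)
    (h : ∀ i, BPos n (f i) (k i)) : BPos n (List.ofFn f).prod (∑ i, k i) := by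
  induction m with
  | zero => simpa using bpos_one n
  | succ m ih =>
    rw [List.ofFn_succ, List.prod_cons, Fin.sum_univ_succ]
    exact (h 0).mul (ih _ _ fun i => h i.succ)

theorem halfTwist_pos (n : ℕ) :
    BPos n (halfTwist n) (∑ r : Fin (n - 1), (n - 1 - (r : ℕ))) := by
  refine bpos_ofFn _ _ fun r => ?_
  have := bpos_ofFn (n := n) (fun c : Fin (n - 1 - (r : ℕ)) =>
      braidGen n ⟨(c : ℕ), by have := c.isLt; omega⟩) (fun _ => 1) (fun c => bpos_gen n _)
  simpa using this

theorem BPos.exp_eq {n : ℕ} {g : BraidGroup n} {k : ℕ} (h : BPos n g k) :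
    (bexp n g).toAdd = (k : ℤ) := by
  obtain ⟨L, rfl, h2, rfl⟩ := h
  induction L with
  | nil => simp
  | cons a L ih =>
    obtain ⟨i, rfl⟩ := h2 a (by simp)
    have := ih fun x hx => h2 x (by simp [hx])
    rw [List.prod_cons, map_mul, toAdd_mul, this, bexp_gen]
    simp [add_comm]

theorem BPos.word {n : ℕ} {g : BraidGroup n} {k : ℕ} (h : BPos n g k) : BWord n g k := by
  obtain ⟨L, h1, h2, h3⟩ := h
  exact ⟨L, h1, fun a ha => (h2 a ha).imp fun i hi => Or.inl hi, h3⟩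

theorem BWord.geod_le {n : ℕ} {g : BraidGroup n} {k : ℕ} (h : BWord n g k) :
    geodesicLength n g ≤ k := Nat.sInf_le h

theorem BPos.geod_le {n : ℕ} {g : BraidGroup n} {k : ℕ} (h : BPos n g k) :
    geodesicLength n g ≤ k := h.word.geod_le

theorem BWord.abs_le {n : ℕ} {g : BraidGroup n} {k : ℕ} (h : BWord n g k) :
    |(bexp n g).toAdd| ≤ (k : ℤ) := by
  obtain ⟨L, rfl, h2, rfl⟩ := h
  induction L with
  | nil => simp
  | cons a L ih =>
    have := ih fun x hx => h2 x (by simp [hx])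
    rw [List.prod_cons, map_mul, toAdd_mul, List.length_cons]
    have ha : |(bexp n a).toAdd| ≤ 1 := by
      obtain ⟨i, rfl | rfl⟩ := h2 a (by simp)
      · simp [bexp_gen]
      · simp [bexp_gen]
    push_cast
    linarith [abs_add_le (bexp n a).toAdd (bexp n L.prod).toAdd]

theorem exists_bword (n : ℕ) (g : BraidGroup n) : ∃ k, BWord n g k := by
  obtain ⟨w, rfl⟩ := PresentedGroup.mk_surjective (braidRels n) g
  induction w using FreeGroup.induction_on with
  | C1 => exact ⟨0, [], by simp⟩
  | of i => exact ⟨1, (bpos_gen n i).word⟩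
  | inv_of i _ => exact ⟨1, [(braidGen n i)⁻¹], rfl,
      fun a ha => ⟨i, Or.inr (List.mem_singleton.1 ha)⟩, by simp; rfl⟩
  | mul x y hx hy =>
    obtain ⟨a, ha⟩ := hx
    obtain ⟨b, hb⟩ := hy
    exact ⟨a + b, by rw [map_mul]; exact ha.mul hb⟩

theorem geod_word (n : ℕ) (g : BraidGroup n) : BWord n g (geodesicLength n g) :=
  Nat.sInf_mem (s := {k | BWord n g k}) (exists_bword n g)

theorem abs_exp_le (n : ℕ) (g : BraidGroup n) :
    |(bexp n g).toAdd| ≤ (geodesicLength n g : ℤ) := (geod_word n g).abs_le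

theorem geod_mul_le (n : ℕ) (g h : BraidGroup n) :
    geodesicLength n (g * h) ≤ geodesicLength n g + geodesicLength n h :=
  ((geod_word n g).mul (geod_word n h)).geod_le

/-- For every `u ∈ B_n` and every integer `p ≥ 1`,
`ℓ(Δ^{2p}·u) − ℓ(Δ^{2(p-1)}·u) ≥ n·(n-1) − 2·ℓ(u)` (as integers). -/
theorem geodesicLength_halfTwist_sq_pow_mul_gap (n : ℕ) (hn : 2 ≤ n)
    (u : BraidGroup n) (p : ℤ) (hp : 1 ≤ p) :
    ((n * (n - 1) : ℕ) : ℤ) - 2 * (geodesicLength n u : ℤ) ≤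
      (geodesicLength n (halfTwist n ^ (2 * p) * u) : ℤ) -
        (geodesicLength n (halfTwist n ^ (2 * (p - 1)) * u) : ℤ) := by
  have hk : ∃ k : ℕ, ((n * (n - 1) : ℕ) : ℤ) = 2 * k ∧ BPos n (halfTwist n) k := by
    refine ⟨_, ?_, halfTwist_pos n⟩
    have h : ∑ r : Fin (n - 1), (n - 1 - (r : ℕ)) = n * (n - 1) / 2 := by
      rw [Fin.sum_univ_eq_sum_range (fun r => n - 1 - r), ← Finset.sum_range_id n]
      obtain ⟨m, rfl⟩ : ∃ m, n = m + 1 := ⟨n - 1, by omega⟩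
      rw [Finset.sum_range_succ', ← Finset.sum_range_reflect]
      simp only [Nat.add_sub_cancel, add_zero]
      refine Finset.sum_congr rfl fun r hr => ?_
      rw [Finset.mem_range] at hr
      omega
    rw [h]
    have h2 := Nat.div_mul_cancel (Nat.even_mul_pred_self n).two_dvd
    omega
  obtain ⟨k, hk, hP⟩ := hk
  rw [hk]
  obtain ⟨q, rfl⟩ : ∃ q : ℕ, p = q + 1 := ⟨(p - 1).toNat, by omega⟩
  have e1 : (2 * ((q : ℤ) + 1)) = ((2 * (q + 1) : ℕ) : ℤ) := by push_cast; ring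
  have e2 : (2 * ((q : ℤ) + 1 - 1)) = ((2 * q : ℕ) : ℤ) := by push_cast; ring
  rw [e1, e2, zpow_natCast, zpow_natCast]
  have hA := (bpos_pow hP (2 * (q + 1))).exp_eq
  have hB := (bpos_pow hP (2 * q)).geod_le
  have h1 := abs_le.1 (abs_exp_le n u)
  have h2 := abs_le.1 (abs_exp_le n (halfTwist n ^ (2 * (q + 1)) * u))
  have h3 := geod_mul_le n (halfTwist n ^ (2 * q)) u
  rw [map_mul, toAdd_mul, hA] at h2
  have h4 : (geodesicLength n (halfTwist n ^ (2 * q) * u) : ℤ) ≤ 2 * q * k + geodesicLength n u := by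
    have : geodesicLength n (halfTwist n ^ (2 * q) * u) ≤ 2 * q * k + geodesicLength n u := by omega
    exact_mod_cast this
  push_cast at h2 h4 ⊢
  linarith [h2.2, h1.1]
end
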